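/- For n ≥ 6 with n ≡ 0 (mod 4), writing d_n(q) = ∑_{k=1}^{β_n} A_n(k) q^k with β_n = binom(n,2) and r = n(n-1)/4, the sequence A_n(β_n + 1 - k)/A_n(k) for k = 2, ..., r is strictly increasing, and A_n(r+1)/A_n(r) < 1. -/

import Mathlib

open Polynomial

/-- The q-derangement polynomial, defined by the recursion
`d_n(q) = (1+q+⋯+q^{n-1}) d_{n-1}(q) + (-1)^n q^{C(n,2)}` for `n ≥ 2`, with `d_1(q) = 0`. -/
noncomputable def dq : ℕ → Polynomial ℤ
  | 0 => 0
  | 1 => 0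
  | (n + 2) =>
      (∑ i ∈ Finset.range (n + 2), X ^ i) * dq (n + 1)
        + (-1) ^ (n + 2) * X ^ ((n + 2).choose 2)

/-- `A n k` is the coefficient of `q^k` in `d_n(q)`. -/
noncomputable def A (n k : ℕ) : ℤ := (dq n).coeff k

/-- windowed sum: multiplication by `1 + q + ... + q^(M-1)` on coefficient sequences. -/
def conv (M : ℕ) (a : ℤ → ℤ) (k : ℤ) : ℤ := ∑ i ∈ Finset.range M, a (k - i)

/-- the 2x2 minors of a sequence against its shifted reversal. -/
def PP (a : ℤ → ℤ) (B i j : ℤ) : ℤ := a i * a (B + 1 - j) - a j * a (B + 1 - i)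

/-- support `[1, B-1]`, positivity, and strict ratio monotonicity. -/
structure Good (a : ℤ → ℤ) (B : ℤ) : Prop where
  lo : ∀ i, i ≤ 0 → a i = 0
  hi : ∀ i, B ≤ i → a i = 0
  pos : ∀ i, 1 ≤ i → i < B → 0 < a i
  mono : ∀ k, 1 ≤ k → k < B → a (k + 1) * a (B + 1 - k) < a k * a (B - k)

lemma conv_rec (M : ℕ) (a : ℤ → ℤ) (k : ℤ) :
    conv M a (k + 1) = conv M a k + a (k + 1) - a (k + 1 - M) := by
  unfold conv
  have h := Finset.sum_range_succ (fun i : ℕ => a (k + 1 - i)) M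
  have h2 := Finset.sum_range_succ' (fun i : ℕ => a (k + 1 - i)) M
  have h3 : ∀ i : ℕ, a (k + 1 - ((i + 1 : ℕ) : ℤ)) = a (k - i) := by
    intro i; congr 1; push_cast; ring
  simp only [h3] at h2
  simp only [Nat.cast_zero, sub_zero] at h2
  linarith

lemma conv_reflect (M : ℕ) (a : ℤ → ℤ) (B k : ℤ) :
    conv M a (B + M - k) = ∑ i ∈ Finset.range M, a (B + 1 - (k - i)) := by
  unfold conv
  rw [← Finset.sum_range_reflect]
  apply Finset.sum_congr rfl
  intro i hi
  rw [Finset.mem_range] at hi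
  congr 1
  have : ((M - 1 - i : ℕ) : ℤ) = M - 1 - i := by omega
  rw [this]; ring

lemma conv_diff (M : ℕ) (a : ℤ → ℤ) (B k : ℤ) :
    conv M a k * conv M a (B + M - 1 - k) - conv M a (k + 1) * conv M a (B + M - k) =
      ∑ i ∈ Finset.range M, (PP a B (k - i) (k + 1) + PP a B (k + 1 - M) (k - i)) := by
  have h1 := conv_rec M a k
  have h2 := conv_rec M a (B + M - 1 - k)
  rw [show B + M - 1 - k + 1 = B + M - k by ring, show B + M - k - M = B - k by ring] at h2
  have h3 := conv_reflect M a B k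
  have h4 : conv M a k = ∑ i ∈ Finset.range M, a (k - i) := rfl
  unfold PP
  simp only [Finset.sum_add_distrib, Finset.sum_sub_distrib, ← Finset.mul_sum, ← Finset.sum_mul]
  rw [← h3, ← h4, show B + 1 - (k + 1) = B - k by ring,
    show B + 1 - (k + 1 - (M : ℤ)) = B + M - k by ring, h1]
  have h5 : conv M a (B + M - 1 - k) = conv M a (B + M - k) - a (B + M - k) + a (B - k) := by
    linarith
  rw [h5]; ring

lemma chain_step {p q x x' y y' : ℤ} (hp : 0 < p) (hx : 0 < x) (hx' : 0 ≤ x')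
    (h : x * q < p * y) (h2 : x' * y < x * y') : x' * q < p * y' := by
  have h3 : p * (x' * y) < p * (x * y') := mul_lt_mul_of_pos_left h2 hp
  have h4 : x' * (x * q) ≤ x' * (p * y) := mul_le_mul_of_nonneg_left h.le hx'
  have : x * (x' * q) < x * (p * y') := by linarith
  exact lt_of_mul_lt_mul_left this hx.le

/-- chaining consecutive inequalities on a range `[s, e]`. -/
lemma chain (a : ℤ → ℤ) (B p q s e : ℤ) (hp : 0 < p)
    (hpos : ∀ j, s ≤ j → j < e → 0 < a j) (hnn : ∀ j, 0 ≤ a j)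
    (hm : ∀ k, s ≤ k → k < e → a (k + 1) * a (B + 1 - k) < a k * a (B - k))
    (h0 : a s * q < p * a (B + 1 - s)) :
    ∀ j, s ≤ j → j ≤ e → a j * q < p * a (B + 1 - j) := by
  intro j hj
  induction j, hj using Int.leInduction with
  | base => intro _; exact h0
  | succ j hj ih =>
    intro hje
    have := hm j hj (by omega)
    rw [show B + 1 - (j + 1) = B - j by ring]
    exact chain_step hp (hpos j hj (by omega)) (hnn _) (ih (by omega)) this

lemma Good.nonneg {a : ℤ → ℤ} {B : ℤ} (h : Good a B) (i : ℤ) : 0 ≤ a i := by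
  by_cases h1 : i ≤ 0
  · rw [h.lo i h1]
  by_cases h2 : B ≤ i
  · rw [h.hi i h2]
  exact (h.pos i (by omega) (by omega)).le

lemma Good.pair_pos {a : ℤ → ℤ} {B : ℤ} (h : Good a B) (i j : ℤ) (hi : 1 ≤ i) (hij : i < j)
    (hj : j ≤ B) : 0 < PP a B i j := by
  have := chain a B (a i) (a (B + 1 - i)) (i + 1) B (h.pos i hi (by omega))
    (fun j h1 h2 => h.pos j (by omega) h2) h.nonneg
    (fun k h1 h2 => h.mono k (by omega) h2)
    (by
      have := h.mono i hi (by omega)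
      rwa [show B + 1 - (i + 1) = B - i by ring]) j (by omega) hj
  unfold PP; linarith

lemma Good.pair_nonneg {a : ℤ → ℤ} {B : ℤ} (h : Good a B) (i j : ℤ) (hij : i ≤ j) :
    0 ≤ PP a B i j := by
  rcases eq_or_lt_of_le hij with rfl | hlt
  · unfold PP; simp
  by_cases h1 : i ≤ 0
  · have := mul_nonneg (h.nonneg i) (h.nonneg (B + 1 - j))
    unfold PP; rw [h.hi (B + 1 - i) (by omega)]; linarith
  by_cases h2 : B < j
  · have := mul_nonneg (h.nonneg i) (h.nonneg (B + 1 - j))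
    unfold PP; rw [h.hi j (by omega)]; linarith
  exact (h.pair_pos i j (by omega) hlt (by omega)).le

lemma conv_lo {M : ℕ} {a : ℤ → ℤ} (h : ∀ i, i ≤ 0 → a i = 0) (i : ℤ) (hi : i ≤ 0) :
    conv M a i = 0 := by
  apply Finset.sum_eq_zero
  intro j _
  exact h _ (by omega)

lemma conv_hi {M : ℕ} {a : ℤ → ℤ} {B : ℤ} (h : ∀ i, B ≤ i → a i = 0) (i : ℤ)
    (hi : B + M - 1 ≤ i) : conv M a i = 0 := by
  apply Finset.sum_eq_zero
  intro j hj
  rw [Finset.mem_range] at hj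
  exact h _ (by omega)

lemma conv_pos {M : ℕ} {a : ℤ → ℤ} {B : ℤ} (hM : 1 ≤ M) (hB : 2 ≤ B) (hnn : ∀ i, 0 ≤ a i)
    (h : ∀ i, 1 ≤ i → i < B → 0 < a i) (i : ℤ)
    (h1 : 1 ≤ i) (hi : i < B + M - 1) : 0 < conv M a i := by
  apply Finset.sum_pos'
  · intro j _; exact hnn _
  · by_cases hb : i < B
    · exact ⟨0, by simp; omega, h _ (by simpa using h1) (by simpa using hb)⟩
    · refine ⟨(i - B + 1).toNat, ?_, h _ ?_ ?_⟩
      · rw [Finset.mem_range]; omega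
      · omega
      · omega

lemma conv_good {M : ℕ} {a : ℤ → ℤ} {B : ℤ} (h : Good a B) (hM : 2 ≤ M) (hMB : (M : ℤ) ≤ B) :
    Good (conv M a) (B + M - 1) where
  lo := conv_lo h.lo
  hi := conv_hi h.hi
  pos := conv_pos (by omega) (by omega) h.nonneg h.pos
  mono := by
    intro k hk1 hk2
    have hd := conv_diff M a B k
    rw [show B + (M : ℤ) - 1 + 1 - k = B + M - k by ring]
    suffices 0 < ∑ i ∈ Finset.range M, (PP a B (k - i) (k + 1) + PP a B (k + 1 - M) (k - i)) by
      linarith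
    apply Finset.sum_pos'
    · intro i hi
      rw [Finset.mem_range] at hi
      exact add_nonneg (h.pair_nonneg _ _ (by omega)) (h.pair_nonneg _ _ (by omega))
    · by_cases hb : k < B
      · refine ⟨0, by simp; omega, ?_⟩
        exact add_pos_of_pos_of_nonneg (h.pair_pos _ _ (by simp; omega) (by simp) (by omega))
          (h.pair_nonneg _ _ (by simp; omega))
      · refine ⟨M - 2, by simp; omega, ?_⟩
        have : ((M - 2 : ℕ) : ℤ) = M - 2 := by omega
        rw [this]
        exact add_pos_of_nonneg_of_pos (h.pair_nonneg _ _ (by omega))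
          (h.pair_pos _ _ (by omega) (by omega) (by omega))

/-- low and top coefficients of `d_(2u+1)`. -/
structure LowTop (u : ℤ) (a : ℤ → ℤ) (B : ℤ) : Prop where
  l1 : a 1 = 1
  l2 : a 2 = 2 * u - 1
  l3 : a 3 = 2 * u ^ 2 - u - 1
  l4 : 3 * a 4 = 3 - 7 * u + 4 * u ^ 3
  l5 : 6 * a 5 = -6 + 5 * u - 13 * u ^ 2 + 4 * u ^ 3 + 4 * u ^ 4
  t1 : a (B - 1) = u
  t2 : a (B - 2) = u ^ 2
  t3 : 6 * a (B - 3) = -6 - u + 3 * u ^ 2 + 4 * u ^ 3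
  t4 : 6 * a (B - 4) = 6 - 13 * u + u ^ 2 + 4 * u ^ 3 + 2 * u ^ 4

lemma conv_low {M : ℕ} {a : ℤ → ℤ} (hM : 5 ≤ M) (h : ∀ i, i ≤ 0 → a i = 0) :
    conv M a 1 = a 1 ∧ conv M a 2 = a 1 + a 2 ∧ conv M a 3 = a 1 + a 2 + a 3 ∧
    conv M a 4 = a 1 + a 2 + a 3 + a 4 ∧ conv M a 5 = a 1 + a 2 + a 3 + a 4 + a 5 := by
  have h0 := conv_lo (M := M) h 0 le_rfl
  have h1 := conv_rec M a 0
  have h2 := conv_rec M a 1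
  have h3 := conv_rec M a 2
  have h4 := conv_rec M a 3
  have h5 := conv_rec M a 4
  rw [h (_ - (M : ℤ)) (by omega)] at h1 h2 h3 h4 h5
  norm_num at h1 h2 h3 h4 h5
  refine ⟨?_, ?_, ?_, ?_, ?_⟩ <;> linarith

lemma conv_top {M : ℕ} {a : ℤ → ℤ} {B B' : ℤ} (hM : 5 ≤ M) (h : ∀ i, B ≤ i → a i = 0)
    (hB' : B' = B + M - 1) :
    conv M a (B' - 1) = a (B - 1) ∧ conv M a (B' - 2) = a (B - 1) + a (B - 2) ∧
    conv M a (B' - 3) = a (B - 1) + a (B - 2) + a (B - 3) ∧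
    conv M a (B' - 4) = a (B - 1) + a (B - 2) + a (B - 3) + a (B - 4) := by
  have h0 := conv_hi (M := M) h B' (by omega)
  have h1 := conv_rec M a (B' - 1)
  have h2 := conv_rec M a (B' - 2)
  have h3 := conv_rec M a (B' - 3)
  have h4 := conv_rec M a (B' - 4)
  rw [h (_ + 1) (by omega)] at h1 h2 h3 h4
  rw [show B' - 1 + 1 - (M : ℤ) = B - 1 by omega, show B' - 1 + 1 = B' by ring] at h1
  rw [show B' - 2 + 1 - (M : ℤ) = B - 2 by omega, show B' - 2 + 1 = B' - 1 by ring] at h2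
  rw [show B' - 3 + 1 - (M : ℤ) = B - 3 by omega, show B' - 3 + 1 = B' - 2 by ring] at h3
  rw [show B' - 4 + 1 - (M : ℤ) = B - 4 by omega, show B' - 4 + 1 = B' - 3 by ring] at h4
  refine ⟨?_, ?_, ?_, ?_⟩ <;> linarith

/-- indicator -/
def ind (b k : ℤ) : ℤ := if k = b then 1 else 0

/-- the intermediate sequence. -/
def gg (u : ℕ) (a : ℤ → ℤ) (B k : ℤ) : ℤ := conv (2 * u + 3) a k + ind (B + 2 * u + 1) k

lemma gg_of_ne (u : ℕ) (a : ℤ → ℤ) (B k : ℤ) (h : k ≠ B + 2 * u + 1) :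
    gg u a B k = conv (2 * u + 3) a k := by
  simp [gg, ind, h]

lemma poly1 {x : ℤ} (h : 3 ≤ x) : 0 < 6 + 9 * x - 12 * x ^ 2 + 9 * x ^ 3 := by
  nlinarith [mul_nonneg (sub_nonneg.2 h) (sq_nonneg x)]

lemma poly2 {x : ℤ} (h : 3 ≤ x) : 0 < 12 + 5 * x - 12 * x ^ 2 + 7 * x ^ 3 := by
  nlinarith [mul_nonneg (sub_nonneg.2 h) (sq_nonneg x)]

lemma poly3 {x : ℤ} (h : 3 ≤ x) :
    (1 + (2 * x - 1) + (2 * x ^ 2 - x - 1)) * (x + 1) < (1 + (1 + (2 * x - 1))) * (x + x ^ 2) := by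
  nlinarith

lemma step_core {M : ℕ} (hM6 : 6 ≤ M) {g : ℤ → ℤ} {B' : ℤ} (hB : (M : ℤ) + 6 ≤ B')
    (glo : ∀ i, i ≤ 0 → g i = 0) (ghi : ∀ i, B' ≤ i → g i = 0)
    (gpos : ∀ i, 1 ≤ i → i < B' → 0 < g i)
    (gm : ∀ k, 3 ≤ k → k < B' - 2 → g (k + 1) * g (B' + 1 - k) < g k * g (B' - k))
    (q5pos : 0 < PP g B' 2 5) (q345pos : 0 < PP g B' 2 3 + PP g B' 2 4 + PP g B' 2 5)
    (q3 : g 3 * g (B' + 1 - 2) < (g 1 + g 2) * g (B' + 1 - 3)) :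
    Good (conv M g) (B' + M - 1) := by
  have gnn : ∀ i, 0 ≤ g i := by
    intro i
    by_cases h1 : i ≤ 0
    · rw [glo i h1]
    by_cases h2 : B' ≤ i
    · rw [ghi i h2]
    exact (gpos i (by omega) (by omega)).le
  -- pairs starting at index at least 3
  have p3 : ∀ i j, 3 ≤ i → i < j → j ≤ B' - 2 → 0 < PP g B' i j := by
    intro i j hi hij hj
    have := chain g B' (g i) (g (B' + 1 - i)) (i + 1) (B' - 2) (gpos i (by omega) (by omega))
      (fun j h1 h2 => gpos j (by omega) (by omega)) gnn
      (fun k h1 h2 => gm k (by omega) h2)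
      (by
        have := gm i hi (by omega)
        rwa [show B' + 1 - (i + 1) = B' - i by ring]) j (by omega) hj
    unfold PP; linarith
  have p2 : ∀ j, 5 ≤ j → j ≤ B' - 2 → 0 < PP g B' 2 j := by
    intro j h5 hj
    have := chain g B' (g 2) (g (B' + 1 - 2)) 5 (B' - 2) (gpos 2 (by omega) (by omega))
      (fun j h1 h2 => gpos j (by omega) (by omega)) gnn
      (fun k h1 h2 => gm k (by omega) h2)
      (by unfold PP at q5pos; linarith) j h5 hj
    unfold PP; linarith
  have z1 : g (B' + 1 - 1) = 0 := ghi _ (by omega)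
  have p12 : ∀ j, 3 ≤ j → j ≤ B' - 2 → 0 < PP g B' 1 j + PP g B' 2 j := by
    intro j h5 hj
    have := chain g B' (g 1 + g 2) (g (B' + 1 - 2)) 3 (B' - 2)
      (add_pos (gpos 1 (by omega) (by omega)) (gpos 2 (by omega) (by omega)))
      (fun j h1 h2 => gpos j (by omega) (by omega)) gnn
      (fun k h1 h2 => gm k (by omega) h2)
      q3 j h5 hj
    unfold PP; rw [z1]; linarith
  have p1 : ∀ j, 0 ≤ PP g B' 1 j := by
    intro j
    have := mul_nonneg (gnn 1) (gnn (B' + 1 - j))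
    unfold PP; rw [z1]; linarith
  have p0 : ∀ i j, i ≤ 0 → PP g B' i j = 0 := by
    intro i j hi
    unfold PP; rw [glo i hi, ghi (B' + 1 - i) (by omega)]; ring
  have pself : ∀ i, PP g B' i i = 0 := by intro i; unfold PP; ring
  have p3' : ∀ i j, 3 ≤ i → i ≤ j → j ≤ B' - 2 → 0 ≤ PP g B' i j := by
    intro i j h1 h2 h3
    rcases eq_or_lt_of_le h2 with rfl | h4
    · rw [pself]
    · exact (p3 i j h1 h4 h3).le
  have p1' : ∀ i j, i ≤ 1 → 0 ≤ PP g B' i j := by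
    intro i j hi
    by_cases h0 : i ≤ 0
    · rw [p0 i j h0]
    · rw [show i = 1 by omega]; exact p1 j
  have half : ∀ k, 1 ≤ k → k + 1 ≤ B' - 2 →
      conv M g (k + 1) * conv M g (B' + M - k) < conv M g k * conv M g (B' + M - 1 - k) := by
    intro k hk1 hk2
    have hd := conv_diff M g B' k
    suffices 0 < ∑ i ∈ Finset.range M, (PP g B' (k - i) (k + 1) + PP g B' (k + 1 - M) (k - i)) by
      linarith
    rcases lt_or_ge (M + 1 : ℤ) k with hk | hk
    · -- window starts at index at least 3
      apply Finset.sum_pos'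
      · intro i hi
        rw [Finset.mem_range] at hi
        exact add_nonneg (p3' _ _ (by omega) (by omega) (by omega))
          (p3' _ _ (by omega) (by omega) (by omega))
      · refine ⟨0, by simp; omega, ?_⟩
        exact add_pos_of_pos_of_nonneg (p3 _ _ (by simp; omega) (by simp) (by omega))
          (p3' _ _ (by omega) (by simp; omega) (by simp; omega))
    rcases eq_or_lt_of_le hk with hk | hk
    · -- window starts at 2
      subst hk
      have hsub : ({M - 2, M - 3, M - 4} : Finset ℕ) ⊆ Finset.range M := by
        intro i hi
        simp only [Finset.mem_insert, Finset.mem_singleton] at hi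
        rw [Finset.mem_range]; omega
      refine lt_of_lt_of_le ?_ (Finset.sum_le_sum_of_subset_of_nonneg hsub ?_)
      · rw [Finset.sum_insert (by simp; omega), Finset.sum_insert (by simp; omega),
          Finset.sum_singleton]
        rw [show (M : ℤ) + 1 - ((M - 2 : ℕ) : ℤ) = 3 by omega,
          show (M : ℤ) + 1 - ((M - 3 : ℕ) : ℤ) = 4 by omega,
          show (M : ℤ) + 1 - ((M - 4 : ℕ) : ℤ) = 5 by omega,
          show (M : ℤ) + 1 + 1 - (M : ℤ) = 2 by ring]
        have r3 := p3 3 (M + 1 + 1) (by omega) (by omega) (by omega)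
        have r4 := p3 4 (M + 1 + 1) (by omega) (by omega) (by omega)
        have r5 := p3 5 (M + 1 + 1) (by omega) (by omega) (by omega)
        linarith
      · intro i hi hni
        rw [Finset.mem_range] at hi
        simp only [Finset.mem_insert, Finset.mem_singleton, not_or] at hni
        rw [show (M : ℤ) + 1 + 1 - (M : ℤ) = 2 by ring]
        by_cases hi1 : i = M - 1
        · rw [show (M : ℤ) + 1 - (i : ℤ) = 2 by omega, pself]
          have := p2 (M + 1 + 1) (by omega) (by omega)
          linarith
        · have r1 := p3 ((M : ℤ) + 1 - (i : ℤ)) (M + 1 + 1) (by omega) (by omega) (by omega)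
          have r2 := p2 ((M : ℤ) + 1 - (i : ℤ)) (by omega) (by omega)
          linarith
    · by_cases hk1' : k = 1
      · subst hk1'
        apply Finset.sum_pos'
        · intro i hi
          exact add_nonneg (p1' _ _ (by omega)) (p1' _ _ (by omega))
        · refine ⟨0, by simp; omega, ?_⟩
          refine add_pos_of_pos_of_nonneg ?_ (p1' _ _ (by omega))
          have := mul_pos (gpos 1 (by omega) (by omega)) (gpos (B' - 1) (by omega) (by omega))
          unfold PP
          rw [show (1 : ℤ) - ((0 : ℕ) : ℤ) = 1 by simp, z1,
            show B' + 1 - (1 + 1) = B' - 1 by ring]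
          linarith
      · have hsub : ({(k - 1).toNat, (k - 2).toNat} : Finset ℕ) ⊆ Finset.range M := by
          intro i hi
          simp only [Finset.mem_insert, Finset.mem_singleton] at hi
          rw [Finset.mem_range]; omega
        refine lt_of_lt_of_le ?_ (Finset.sum_le_sum_of_subset_of_nonneg hsub ?_)
        · rw [Finset.sum_pair (by omega)]
          rw [show k - ((k - 1).toNat : ℤ) = 1 by omega,
            show k - ((k - 2).toNat : ℤ) = 2 by omega]
          have r1 := p12 (k + 1) (by omega) (by omega)
          have r2 := p1' (k + 1 - M) 1 (by omega)
          have r3 := p1' (k + 1 - M) 2 (by omega)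
          linarith
        · intro i hi hni
          rw [Finset.mem_range] at hi
          simp only [Finset.mem_insert, Finset.mem_singleton, not_or] at hni
          refine add_nonneg ?_ (p1' _ _ (by omega))
          by_cases hi1 : k - (i : ℤ) ≤ 0
          · rw [p0 _ _ hi1]
          · exact p3' _ _ (by omega) (by omega) (by omega)
  refine ⟨conv_lo glo, conv_hi ghi, conv_pos (by omega) (by omega) gnn gpos, ?_⟩
  · intro k hk1 hk2
    rw [show B' + (M : ℤ) - 1 + 1 - k = B' + M - k by ring]
    by_cases hk : k + 1 ≤ B' - 2
    · exact half k hk1 hk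
    · have := half (B' + M - 1 - k) (by omega) (by omega)
      rw [show B' + (M : ℤ) - (B' + M - 1 - k) = k + 1 by ring,
        show B' + (M : ℤ) - 1 - (B' + M - 1 - k) = k by ring,
        show B' + (M : ℤ) - 1 - k + 1 = B' + M - k by ring] at this
      linarith

set_option maxHeartbeats 2000000 in
lemma step {u : ℕ} (hu : 3 ≤ u) {a : ℤ → ℤ} {B : ℤ} (hB : 2 * (u : ℤ) + 8 ≤ B)
    (h : Good a B) (hl : LowTop u a B) :
    Good (conv (2 * u + 2) (gg u a B)) (B + 4 * u + 3) ∧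
    LowTop (u + 1) (conv (2 * u + 2) (gg u a B)) (B + 4 * u + 3) := by
  have hu' : (3 : ℤ) ≤ u := by exact_mod_cast hu
  obtain ⟨B', hB'⟩ : ∃ B', B' = B + 2 * (u : ℤ) + 2 := ⟨_, rfl⟩
  have hc : Good (conv (2 * u + 3) a) B' := by
    have := conv_good (M := 2 * u + 3) h (by omega) (by push_cast; omega)
    convert this using 1
    push_cast; rw [hB']; ring
  have hlow := conv_low (M := 2 * u + 3) (by omega) h.lo
  have htop := conv_top (M := 2 * u + 3) (B' := B') (by omega) h.hi (by push_cast; omega)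
  obtain ⟨g, hg⟩ : ∃ g, g = gg u a B := ⟨_, rfl⟩
  have hne : ∀ k, k ≠ B' - 1 → g k = conv (2 * u + 3) a k := by
    intro k hk; rw [hg]; exact gg_of_ne _ _ _ _ (by omega)
  have heq : g (B' - 1) = conv (2 * u + 3) a (B' - 1) + 1 := by
    rw [hg]; unfold gg ind; rw [if_pos (by omega)]
  rw [← hg]
  obtain ⟨c1, c2, c3, c4, c5⟩ := hlow
  obtain ⟨e1, e2, e3, e4⟩ := htop
  rw [← hne _ (by omega)] at c1 c2 c3 c4 c5 e2 e3 e4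
  rw [e1] at heq
  obtain ⟨l1, l2, l3, l4, l5, t1, t2, t3, t4⟩ := hl
  have glo : ∀ i, i ≤ 0 → g i = 0 := fun i hi => by
    rw [hne i (by omega)]; exact hc.lo i hi
  have ghi : ∀ i, B' ≤ i → g i = 0 := fun i hi => by
    rw [hne i (by omega)]; exact hc.hi i hi
  have gpos : ∀ i, 1 ≤ i → i < B' → 0 < g i := fun i hi hi2 => by
    by_cases hi3 : i = B' - 1
    · rw [hi3, heq, t1]; omega
    · rw [hne i hi3]; exact hc.pos i hi hi2
  have gnn : ∀ i, 0 ≤ g i := by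
    intro i
    by_cases h1 : i ≤ 0
    · rw [glo i h1]
    by_cases h2 : B' ≤ i
    · rw [ghi i h2]
    exact (gpos i (by omega) (by omega)).le
  have gm : ∀ k, 3 ≤ k → k < B' - 2 → g (k + 1) * g (B' + 1 - k) < g k * g (B' - k) := by
    intro k h1 h2
    rw [hne (k + 1) (by omega), hne (B' + 1 - k) (by omega), hne k (by omega),
      hne (B' - k) (by omega)]
    exact hc.mono k (by omega) (by omega)
  have q5 : 6 * PP g B' 2 5 = 6 + 9 * u - 12 * u ^ 2 + 9 * u ^ 3 := by
    unfold PP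
    rw [show B' + 1 - 5 = B' - 4 by ring, show B' + 1 - 2 = B' - 1 by ring, c2, e4, c5, heq,
      l1, l2, l3, t1, t2]
    linear_combination (2 * (u : ℤ)) * (t3 + t4) - (u + 1) * (2 * l4 + l5)
  have q345 : 6 * (PP g B' 2 3 + PP g B' 2 4 + PP g B' 2 5)
      = 12 + 5 * u - 12 * u ^ 2 + 7 * u ^ 3 := by
    unfold PP
    rw [show B' + 1 - 5 = B' - 4 by ring, show B' + 1 - 2 = B' - 1 by ring,
      show B' + 1 - 4 = B' - 3 by ring, show B' + 1 - 3 = B' - 2 by ring,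
      c2, e4, c5, heq, c3, c4, e2, e3, l1, l2, l3, t1, t2]
    linear_combination (2 * (u : ℤ)) * (2 * t3 + t4) - (u + 1) * (4 * l4 + l5)
  have q5pos : 0 < PP g B' 2 5 := by
    have := poly1 hu'
    linarith
  have q345pos : 0 < PP g B' 2 3 + PP g B' 2 4 + PP g B' 2 5 := by
    have := poly2 hu'
    linarith
  have q3 : g 3 * g (B' + 1 - 2) < (g 1 + g 2) * g (B' + 1 - 3) := by
    rw [show B' + 1 - 3 = B' - 2 by ring, show B' + 1 - 2 = B' - 1 by ring,
      c1, c2, c3, e2, heq, l1, l2, l3, t1, t2]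
    exact poly3 hu'
  have hBB : B + 4 * (u : ℤ) + 3 = B' + ((2 * u + 2 : ℕ) : ℤ) - 1 := by push_cast; rw [hB']; ring
  obtain ⟨M, hM⟩ : ∃ M, M = 2 * u + 2 := ⟨_, rfl⟩
  rw [hBB, ← hM]
  refine ⟨step_core (by clear * - hM hu; omega) (by clear * - hB hM hB'; omega) glo ghi gpos gm q5pos q345pos q3, ?_⟩
  · obtain ⟨c1', c2', c3', c4', c5'⟩ := conv_low (M := M) (by clear * - hM hu; omega) glo
    obtain ⟨e1', e2', e3', e4'⟩ := conv_top (M := M) (by clear * - hM hu; omega) ghi rfl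
    constructor
    · rw [c1', c1, l1]
    · rw [c2', c1, c2, l1, l2]; ring
    · rw [c3', c1, c2, c3, l1, l2, l3]; ring
    · rw [c4', c1, c2, c3, c4, l1, l2, l3]; linear_combination l4
    · rw [c5', c1, c2, c3, c4, c5, l1, l2, l3]; linear_combination 4 * l4 + l5
    · rw [e1', heq, t1]
    · rw [e2', heq, e2, t1, t2]; ring
    · rw [e3', heq, e2, e3, t1, t2]; linear_combination t3
    · rw [e4', heq, e2, e3, e4, t1, t2]; linear_combination 2 * t3 + t4

/-- coefficients of `dq n` extended by zero to the integers. -/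
noncomputable def aZ (n : ℕ) (k : ℤ) : ℤ := if 0 ≤ k then A n k.toNat else 0

lemma aZ_nat (n k : ℕ) : aZ n (k : ℤ) = A n k := by simp [aZ]

lemma dq_rec (n : ℕ) : dq (n + 2) = (∑ i ∈ Finset.range (n + 2), X ^ i) * dq (n + 1)
        + (-1) ^ (n + 2) * X ^ ((n + 2).choose 2) := by
  rw [dq]

lemma aZ_rec (n : ℕ) (k : ℤ) : aZ (n + 2) k =
    conv (n + 2) (aZ (n + 1)) k + (-1) ^ n * ind ((n + 2).choose 2 : ℕ) k := by
  by_cases hk : 0 ≤ k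
  · obtain ⟨m, rfl⟩ := Int.eq_ofNat_of_zero_le hk
    rw [aZ_nat]
    unfold A
    rw [dq_rec, coeff_add, Finset.sum_mul, finsetSum_coeff]
    congr 1
    · apply Finset.sum_congr rfl
      intro i _
      rw [coeff_X_pow_mul']
      unfold aZ A
      by_cases h : i ≤ m
      · rw [if_pos h, if_pos (by omega)]; congr 1; omega
      · rw [if_neg h, if_neg (by omega)]
    · rw [show ((-1 : ℤ[X]) ^ (n + 2)) = C ((-1) ^ n) by simp [pow_add], coeff_C_mul, coeff_X_pow]
      unfold ind
      norm_cast
  · have h1 : aZ (n + 2) k = 0 := by unfold aZ; rw [if_neg hk]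
    have h2 : conv (n + 2) (aZ (n + 1)) k = 0 := by
      apply Finset.sum_eq_zero
      intro i _
      unfold aZ; rw [if_neg (by omega)]
    have h3 : ind ((n + 2).choose 2 : ℕ) k = 0 := by
      unfold ind; rw [if_neg (by omega)]
    rw [h1, h2, h3]; simp

lemma conv_comm (M L : ℕ) (a : ℤ → ℤ) (k : ℤ) : conv M (conv L a) k = conv L (conv M a) k := by
  unfold conv
  rw [Finset.sum_comm]
  apply Finset.sum_congr rfl; intro i _
  apply Finset.sum_congr rfl; intro j _
  congr 1; ring

lemma conv_add (M : ℕ) (a b : ℤ → ℤ) (k : ℤ) :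
    conv M (fun x => a x + b x) k = conv M a k + conv M b k := by
  unfold conv; rw [Finset.sum_add_distrib]

lemma conv_succ (M : ℕ) (a : ℤ → ℤ) (k : ℤ) : conv (M + 1) a k = conv M a k + a (k - M) := by
  unfold conv; rw [Finset.sum_range_succ]

lemma choose_int (m : ℕ) : (((m + 1).choose 2 : ℕ) : ℤ) = (m.choose 2 : ℕ) + m := by
  rw [Nat.choose_succ_succ' m 1]; push_cast; simp; ring

lemma choose_odd (u : ℕ) : (((2 * u + 1).choose 2 : ℕ) : ℤ) = (2 * u + 1) * u := by
  induction u with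
  | zero => simp
  | succ u ih =>
    rw [show 2 * (u + 1) + 1 = (2 * u + 1 + 1) + 1 by ring, choose_int, choose_int, ih]
    push_cast; ring

lemma aZ_even (u : ℕ) (k : ℤ) : aZ (2 * u + 2) k =
    conv (2 * u + 2) (aZ (2 * u + 1)) k + ind ((2 * u + 1) * u + 2 * u + 1) k := by
  have h := aZ_rec (2 * u) k
  have h2 := choose_int (2 * u + 1)
  rw [choose_odd] at h2
  rw [h2] at h
  rw [h]; simp [pow_mul, add_assoc]

lemma aZ_step (u : ℕ) : aZ (2 * u + 3) =
    conv (2 * u + 2) (gg u (aZ (2 * u + 1)) ((2 * u + 1) * u)) := by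
  funext k
  have h := aZ_rec (2 * u + 1) k
  have h2 := choose_odd (u + 1)
  rw [show 2 * (u + 1) + 1 = 2 * u + 1 + 2 by ring] at h2
  rw [h2] at h
  rw [show 2 * u + 3 = 2 * u + 1 + 2 by ring, h, show 2 * u + 1 + 1 = 2 * u + 2 by ring,
    show aZ (2 * u + 2) = _ from funext (aZ_even u), conv_add, conv_comm,
    show 2 * u + 1 + 2 = (2 * u + 2) + 1 by ring, conv_succ (2 * u + 2) (ind _)]
  have h3 : gg u (aZ (2 * u + 1)) ((2 * u + 1) * u) = fun x =>
    conv (2 * u + 3) (aZ (2 * u + 1)) x + ind ((2 * u + 1) * u + 2 * u + 1) x := rfl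
  rw [h3, conv_add]
  have h4 : ind ((2 * (u : ℤ) + 1) * u + 2 * u + 1) (k - ((2 * u + 2 : ℕ) : ℤ)) =
      ind ((2 * ((u + 1 : ℕ) : ℤ) + 1) * ((u + 1 : ℕ) : ℤ)) k := by
    unfold ind
    congr 1
    apply propext
    push_cast
    constructor <;> intro h <;> linarith
  rw [h4]
  have h5 : ((-1 : ℤ)) ^ (2 * u + 1) = -1 := by simp [pow_succ, pow_mul]
  rw [h5]; ring

lemma dq7 : dq 7 = X + 5 * X ^ 2 + 14 * X ^ 3 + 30 * X ^ 4 + 54 * X ^ 5 + 86 * X ^ 6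
    + 123 * X ^ 7 + 160 * X ^ 8 + 191 * X ^ 9 + 210 * X ^ 10 + 214 * X ^ 11 + 202 * X ^ 12
    + 176 * X ^ 13 + 141 * X ^ 14 + 104 * X ^ 15 + 69 * X ^ 16 + 41 * X ^ 17 + 21 * X ^ 18
    + 9 * X ^ 19 + 3 * X ^ 20 := by
  have h1 : dq 1 = 0 := by rw [dq]
  have h2 : dq 2 = X := by
    rw [dq_rec 0, h1]; simp
  have h3 : dq 3 = X + X ^ 2 := by
    rw [dq_rec 1, h2, show Nat.choose (1 + 2) 2 = 3 by decide]
    simp only [Finset.sum_range_succ, Finset.sum_range_zero]; ring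
  have h4 : dq 4 = X + 2 * X ^ 2 + 2 * X ^ 3 + 2 * X ^ 4 + X ^ 5 + X ^ 6 := by
    rw [dq_rec 2, h3, show Nat.choose (2 + 2) 2 = 6 by decide]
    simp only [Finset.sum_range_succ, Finset.sum_range_zero]; ring
  have h5 : dq 5 = X + 3 * X ^ 2 + 5 * X ^ 3 + 7 * X ^ 4 + 8 * X ^ 5 + 8 * X ^ 6 + 6 * X ^ 7
      + 4 * X ^ 8 + 2 * X ^ 9 := by
    rw [dq_rec 3, h4, show Nat.choose (3 + 2) 2 = 10 by decide]
    simp only [Finset.sum_range_succ, Finset.sum_range_zero]; ring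
  have h6 : dq 6 = X + 4 * X ^ 2 + 9 * X ^ 3 + 16 * X ^ 4 + 24 * X ^ 5 + 32 * X ^ 6 + 37 * X ^ 7
      + 38 * X ^ 8 + 35 * X ^ 9 + 28 * X ^ 10 + 20 * X ^ 11 + 12 * X ^ 12 + 6 * X ^ 13
      + 2 * X ^ 14 + X ^ 15 := by
    rw [dq_rec 4, h5, show Nat.choose (4 + 2) 2 = 15 by decide]
    simp only [Finset.sum_range_succ, Finset.sum_range_zero]; ring
  rw [dq_rec 5, h6, show Nat.choose (5 + 2) 2 = 21 by decide]
  simp only [Finset.sum_range_succ, Finset.sum_range_zero]; ring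

/-- coefficients of `dq 7` as a list. -/
def L7 : List ℤ := [0, 1, 5, 14, 30, 54, 86, 123, 160, 191, 210, 214, 202, 176, 141, 104, 69, 41,
  21, 9, 3]

lemma A7 (k : ℕ) : A 7 k = L7.getD k 0 := by
  have h : A 7 k = ∑ i ∈ Finset.range 21, if k = i then L7.getD i 0 else 0 := by
    have : dq 7 = ∑ i ∈ Finset.range 21, C (L7.getD i 0) * X ^ i := by
      rw [dq7]
      simp [Finset.sum_range_succ, L7]
    unfold A
    rw [this, finsetSum_coeff]
    apply Finset.sum_congr rfl
    intro i _
    rw [coeff_C_mul_X_pow]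
  rw [h, Finset.sum_ite_eq]
  split_ifs with hk
  · rfl
  · rw [Finset.mem_range] at hk
    rw [List.getD_eq_default]; simp [L7]; omega

/-- integer-indexed table. -/
def T7 (k : ℤ) : ℤ := if 0 ≤ k then L7.getD k.toNat 0 else 0

lemma aZ7 : aZ 7 = T7 := by
  funext k; unfold aZ T7; simp only [A7]

lemma base_good : Good (aZ 7) 21 := by
  rw [aZ7]
  constructor
  · intro i hi
    rcases eq_or_lt_of_le hi with rfl | h
    · rfl
    · unfold T7; rw [if_neg (by omega)]
  · intro i hi
    unfold T7
    rw [if_pos (by omega), List.getD_eq_default]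
    simp [L7]; omega
  · intro i h1 h2
    interval_cases i <;> decide
  · intro i h1 h2
    interval_cases i <;> decide

lemma base_LT : LowTop 3 (aZ 7) 21 := by
  rw [aZ7]
  constructor <;> decide

lemma all_good (u : ℕ) (hu : 3 ≤ u) :
    Good (aZ (2 * u + 1)) ((2 * u + 1) * u) ∧ LowTop u (aZ (2 * u + 1)) ((2 * u + 1) * u) := by
  induction u, hu using Nat.le_induction with
  | base => exact ⟨by simpa using base_good, by simpa using base_LT⟩
  | succ u hu ih =>
    have hu' : (3 : ℤ) ≤ u := by exact_mod_cast hu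
    have := step hu (by nlinarith) ih.1 ih.2
    rw [← aZ_step] at this
    rw [show 2 * (u + 1) + 1 = 2 * u + 3 by ring]
    push_cast
    rw [show (2 * ((u : ℤ) + 1) + 1) * (u + 1) = (2 * u + 1) * u + 4 * u + 3 by ring]
    exact this

theorem stmt_17 (n : ℕ) (hn : 6 ≤ n) (hmod : n % 4 = 0) :
    (∀ k, 2 ≤ k → k + 1 ≤ n * (n - 1) / 4 →
      (A n (n.choose 2 + 1 - k) : ℚ) / (A n k : ℚ) <
        (A n (n.choose 2 + 1 - (k + 1)) : ℚ) / (A n (k + 1) : ℚ)) ∧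
    (A n (n * (n - 1) / 4 + 1) : ℚ) / (A n (n * (n - 1) / 4) : ℚ) < 1 := by
  obtain ⟨u, rfl⟩ : ∃ u, n = 2 * u + 2 := ⟨n / 2 - 1, by omega⟩
  have hu : 3 ≤ u := by omega
  obtain ⟨v, rfl⟩ : ∃ v, u = 2 * v + 1 := ⟨u / 2, by omega⟩
  have hgood := (all_good (2 * v + 1) hu).1
  have hch : (2 * (2 * v + 1) + 2).choose 2 = 2 * ((v + 1) * (4 * v + 3)) := by
    rw [Nat.choose_two_right]
    rw [show 2 * (2 * v + 1) + 2 - 1 = 4 * v + 3 by omega]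
    rw [show (2 * (2 * v + 1) + 2) * (4 * v + 3) = 2 * (2 * ((v + 1) * (4 * v + 3))) by ring]
    omega
  have hr : (2 * (2 * v + 1) + 2) * (2 * (2 * v + 1) + 2 - 1) / 4 = (v + 1) * (4 * v + 3) := by
    rw [show 2 * (2 * v + 1) + 2 - 1 = 4 * v + 3 by omega]
    rw [show (2 * (2 * v + 1) + 2) * (4 * v + 3) = 4 * ((v + 1) * (4 * v + 3)) by ring]
    omega
  rw [hr, hch]
  have hv : 1 ≤ v := by omega
  have hrbig : 14 ≤ (v + 1) * (4 * v + 3) := by nlinarith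
  have hc := conv_good (M := 2 * (2 * v + 1) + 2) hgood (by omega) (by push_cast; nlinarith)
  have hBeq : (2 * ((2 * v + 1 : ℕ) : ℤ) + 1) * ((2 * v + 1 : ℕ) : ℤ)
      + ((2 * (2 * v + 1) + 2 : ℕ) : ℤ) - 1 = 2 * (((v + 1) * (4 * v + 3) : ℕ) : ℤ) := by
    push_cast; ring
  rw [hBeq] at hc
  have hA : ∀ k : ℕ, k < 2 * ((v + 1) * (4 * v + 3)) →
      A (2 * (2 * v + 1) + 2) k
        = conv (2 * (2 * v + 1) + 2) (aZ (2 * (2 * v + 1) + 1)) (k : ℤ) := by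
    intro k hk
    rw [← aZ_nat, aZ_even]
    have : ind ((2 * ((2 * v + 1 : ℕ) : ℤ) + 1) * ((2 * v + 1 : ℕ) : ℤ)
        + 2 * ((2 * v + 1 : ℕ) : ℤ) + 1) (k : ℤ) = 0 := by
      unfold ind; rw [if_neg]
      have h6 : (2 * ((2 * v + 1 : ℕ) : ℤ) + 1) * ((2 * v + 1 : ℕ) : ℤ)
        + 2 * ((2 * v + 1 : ℕ) : ℤ) + 1 = 2 * (((v + 1) * (4 * v + 3) : ℕ) : ℤ) := by
        push_cast; ring
      rw [h6]; omega
    rw [this, add_zero]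
  generalize hrr : (v + 1) * (4 * v + 3) = r at *
  generalize 2 * (2 * v + 1) + 2 = n at *
  generalize conv n (aZ (2 * (2 * v + 1) + 1)) = c at *
  constructor
  · intro k hk1 hk2
    have hm := hc.mono k (by omega) (by omega)
    have hp1 := hc.pos k (by omega) (by omega)
    have hp2 := hc.pos (k + 1) (by omega) (by omega)
    rw [hA _ (by omega), hA _ (by omega), hA _ (by omega), hA _ (by omega)]
    rw [show ((2 * r + 1 - k : ℕ) : ℤ) = 2 * (r : ℤ) + 1 - k by omega,
      show ((2 * r + 1 - (k + 1) : ℕ) : ℤ) = 2 * (r : ℤ) - k by omega]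
    rw [div_lt_div_iff₀ (by exact_mod_cast hp1) (by exact_mod_cast hp2)]
    have : c (2 * r + 1 - k) * c (k + 1) < c (2 * r - k) * c k := by linarith
    exact_mod_cast this
  · have hm := hc.mono r (by omega) (by omega)
    have hp1 := hc.pos r (by omega) (by omega)
    have hp2 := hc.pos (r + 1) (by omega) (by omega)
    rw [hA _ (by omega), hA _ (by omega)]
    rw [show 2 * (r : ℤ) + 1 - r = r + 1 by ring, show 2 * (r : ℤ) - r = r by ring] at hm
    rw [div_lt_one (by exact_mod_cast hp1)]
    have : c (r + 1) < c r := by nlinarith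
    exact_mod_cast this
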